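/- Fix a real number α with 0 < α < 1/2. Let (γ,d) be a graphical two-class PAM instance on n vertices such that |V_1| ≥ αn, |V_2| ≥ αn, 2 ≤ d_i and d_i² ≤ αn/4 for all vertices i, and 1 ≤ γ ≤ αn/2, and let c_11 and c_22 be the internal edge counts of any realization in G(γ,d), i.e., c_ii = ((Σ_{j∈V_i} d_j) − γ)/2. Then for every G ∈ G'(γ,d) there exists a sequence of graphs G = G_0, G_1, …, G_t with t ≤ 3 such that every G_i belongs to G'(γ,d), each G_{i+1} is obtained from G_i by a hinge flip, and G_t is edge-balanced: G_t has exactly γ cut edges, exactly c_11 internal edges in V_1, and exactly c_22 internal edges in V_2. -/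

import Mathlib

/-!
Write `δ v = deg G v - d v` and `D = ∑ v ∈ V₁, δ v`, so that `∑ v ∈ V₂, δ v = -D`. Splitting the
degree sum of a class into cut edges and internal edges (`sum_deg_eq`, `two_mul_intCount1`) shows
that the cut count together with `D` determines both internal edge counts, and that
`cutCount V₁ G - γ ≡ D` modulo `2`. As `|cutCount V₁ G - γ| ≤ 1`, the graph is edge-balanced as
soon as `D = 0`, and `∑ |δ| ≤ 4` forces `|D| ≤ 2`. Swapping the classes, assume `D > 0`.

* `exists_balancing_flip`: if `D = 1` and the cut count is off by one, a single flip `ij → jk` with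
  `i ∈ V₁`, `k ∈ V₂` balances the graph. It raises `∑ |δ|` by at most `2`, which is harmless when
  `∑ |δ| ≤ 2`.
* `exists_two_flips`: given `x` with `δ x > 0` and `y` with `δ y < 0`, two flips `xj → jk` and
  `kj' → j'y`, with `k` in the class of `y`, move one unit of degree from `x` to `y`. The first
  does not raise `∑ |δ|`, and after the second it is smaller by at least `2` than at the start. A
  suitable `k` exists because fewer than `4 M²` vertices are excluded, `M` being the largest `d i`.

If `D = 1` and `∑ |δ| ≤ 2`, the balancing flip suffices. If `D = 1` and `∑ |δ| > 2`, some class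
contains both a positive and a negative `δ`, and two flips inside that class lead to the previous
case. If `D = 2`, take `x ∈ V₁` and `y ∈ V₂`; the two flips change the cut count by exactly one and
leave `D = 1`.
-/

open SimpleGraph
open scoped symmDiff

/-- The degree of vertex `v` in graph `G`. -/
noncomputable def deg {n : ℕ} (G : SimpleGraph (Fin n)) (v : Fin n) : ℕ :=
  (G.neighborSet v).ncard

/-- The number of cut edges of `G`: edges with one endpoint in the class `V₁`
and one endpoint in the class `V₂ = V₁ᶜ`. -/
noncomputable def cutCount {n : ℕ} (V1 : Finset (Fin n)) (G : SimpleGraph (Fin n)) : ℕ :=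
  {e ∈ G.edgeSet | ∃ u v : Fin n, e = s(u, v) ∧ u ∈ V1 ∧ v ∉ V1}.ncard

/-- The number of internal edges of `G` inside `V₁`. -/
noncomputable def intCount1 {n : ℕ} (V1 : Finset (Fin n)) (G : SimpleGraph (Fin n)) : ℕ :=
  {e ∈ G.edgeSet | ∃ u v : Fin n, e = s(u, v) ∧ u ∈ V1 ∧ v ∈ V1}.ncard

/-- The number of internal edges of `G` inside `V₂ = V₁ᶜ`. -/
noncomputable def intCount2 {n : ℕ} (V1 : Finset (Fin n)) (G : SimpleGraph (Fin n)) : ℕ :=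
  {e ∈ G.edgeSet | ∃ u v : Fin n, e = s(u, v) ∧ u ∉ V1 ∧ v ∉ V1}.ncard

/-- `G ∈ 𝒢(γ,d)`: vertex `i` has degree `d i` for every `i`, and `G` has
exactly `γ` cut edges. -/
def memPAM {n : ℕ} (V1 : Finset (Fin n)) (γ : ℕ) (d : Fin n → ℕ)
    (G : SimpleGraph (Fin n)) : Prop :=
  (∀ v, deg G v = d v) ∧ cutCount V1 G = γ

/-- `G ∈ 𝒢'(γ,d)`: the degree sequence `d'` of `G` and its number `γ'` of cut
edges satisfy `Σ d'ᵢ = Σ dᵢ`, `Σ |dᵢ − d'ᵢ| ≤ 4`, and `|γ' − γ| ≤ 1`. -/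
def memPAM' {n : ℕ} (V1 : Finset (Fin n)) (γ : ℕ) (d : Fin n → ℕ)
    (G : SimpleGraph (Fin n)) : Prop :=
  (∑ v, deg G v = ∑ v, d v) ∧
  (∑ v, |(d v : ℤ) - (deg G v : ℤ)| ≤ 4) ∧
  |(cutCount V1 G : ℤ) - (γ : ℤ)| ≤ 1

/-- A hinge flip: replace an edge `{i,j}` of `G` by a non-edge `{j,k}`. -/
def hingeFlip {n : ℕ} (G H : SimpleGraph (Fin n)) : Prop :=
  ∃ i j k : Fin n, G.Adj i j ∧ j ≠ k ∧ ¬ G.Adj j k ∧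
    H = (G.deleteEdges {s(i, j)}) ⊔ fromEdgeSet {s(j, k)}

/-! ### Adjacency indicators and edge counts -/

open Classical in
/-- The adjacency indicator of `G`, with integer values. -/
noncomputable def adjInd {n : ℕ} (G : SimpleGraph (Fin n)) (u v : Fin n) : ℤ :=
  if G.Adj u v then 1 else 0

open Classical in
/-- The neighbours of `v`, as a finset. -/
noncomputable def nbr {n : ℕ} (G : SimpleGraph (Fin n)) (v : Fin n) : Finset (Fin n) :=
  Finset.univ.filter (G.Adj v)

lemma mem_nbr {n : ℕ} (G : SimpleGraph (Fin n)) (u v : Fin n) : u ∈ nbr G v ↔ G.Adj v u := by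
  simp [nbr]

lemma deg_eq_card {n : ℕ} (G : SimpleGraph (Fin n)) (v : Fin n) : deg G v = (nbr G v).card := by
  rw [deg, ← Set.ncard_coe_finset]
  congr 1
  ext u
  simp [mem_nbr]

lemma deg_eq_sum {n : ℕ} (G : SimpleGraph (Fin n)) (v : Fin n) :
    (deg G v : ℤ) = ∑ u, adjInd G v u := by
  classical
  simp [deg_eq_card, nbr, adjInd, Finset.sum_boole]

lemma cutCount_eq_sum {n : ℕ} (V1 : Finset (Fin n)) (G : SimpleGraph (Fin n)) :
    (cutCount V1 G : ℤ) = ∑ u ∈ V1, ∑ v ∈ V1ᶜ, adjInd G u v := by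
  classical
  have h1 : {e ∈ G.edgeSet | ∃ u v : Fin n, e = s(u, v) ∧ u ∈ V1 ∧ v ∉ V1} =
      (fun p : Fin n × Fin n => s(p.1, p.2)) ''
        ((V1 ×ˢ V1ᶜ).filter (fun p => G.Adj p.1 p.2) : Finset (Fin n × Fin n)) := by
    ext e
    simp only [Set.mem_ofPred_eq, Set.mem_image, Finset.coe_filter, Finset.mem_product,
      Finset.mem_compl, Prod.exists]
    constructor
    · rintro ⟨he, u, v, rfl, hu, hv⟩
      exact ⟨u, v, ⟨⟨hu, hv⟩, he⟩, rfl⟩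
    · rintro ⟨u, v, ⟨⟨hu, hv⟩, he⟩, rfl⟩
      exact ⟨he, u, v, rfl, hu, hv⟩
  rw [cutCount, h1, Set.InjOn.ncard_image, Set.ncard_coe_finset, Finset.card_filter,
    Finset.sum_product]
  · simp [adjInd]
  · rintro ⟨u, v⟩ h ⟨u', v'⟩ h' e
    simp only [Finset.coe_filter, Finset.mem_product, Finset.mem_compl, Set.mem_ofPred_eq] at h h'
    simp only [Sym2.eq_iff] at e
    rcases e with ⟨rfl, rfl⟩ | ⟨rfl, rfl⟩
    · rfl
    · exact absurd h.1.1 h'.1.2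

lemma adjInd_comm {n : ℕ} (G : SimpleGraph (Fin n)) (u v : Fin n) :
    adjInd G u v = adjInd G v u := by
  classical exact if_congr (G.adj_comm u v) rfl rfl

lemma cutCount_compl {n : ℕ} (V1 : Finset (Fin n)) (G : SimpleGraph (Fin n)) :
    cutCount V1ᶜ G = cutCount V1 G := by
  have h : (cutCount V1ᶜ G : ℤ) = cutCount V1 G := by
    rw [cutCount_eq_sum, cutCount_eq_sum, Finset.sum_comm, compl_compl]
    exact Finset.sum_congr rfl fun u _ => Finset.sum_congr rfl fun v _ => adjInd_comm G v u
  exact_mod_cast h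

lemma intCount2_eq {n : ℕ} (V1 : Finset (Fin n)) (G : SimpleGraph (Fin n)) :
    intCount2 V1 G = intCount1 V1ᶜ G := by
  simp [intCount1, intCount2]

/-- Handshake inside a class, from the handshake lemma for the graph of internal edges. -/
lemma two_mul_intCount1 {n : ℕ} (V1 : Finset (Fin n)) (G : SimpleGraph (Fin n)) :
    2 * (intCount1 V1 G : ℤ) = ∑ u ∈ V1, ∑ v ∈ V1, adjInd G u v := by
  classical
  let K : SimpleGraph (Fin n) :=
    { Adj := fun u v => G.Adj u v ∧ u ∈ V1 ∧ v ∈ V1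
      symm := ⟨fun u v h => ⟨h.1.symm, h.2.2, h.2.1⟩⟩
      loopless := ⟨fun u h => G.loopless.irrefl u h.1⟩ }
  have h1 : {e ∈ G.edgeSet | ∃ u v : Fin n, e = s(u, v) ∧ u ∈ V1 ∧ v ∈ V1} = K.edgeFinset := by
    ext e
    induction e with
    | _ a b =>
      simp only [Set.mem_ofPred_eq, SimpleGraph.mem_edgeSet, SimpleGraph.coe_edgeFinset]
      constructor
      · rintro ⟨h, u, v, e, hu, hv⟩
        rw [Sym2.eq_iff] at e
        rcases e with ⟨rfl, rfl⟩ | ⟨rfl, rfl⟩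
        · exact ⟨h, hu, hv⟩
        · exact ⟨h, hv, hu⟩
      · rintro ⟨h, hu, hv⟩
        exact ⟨h, a, b, rfl, hu, hv⟩
  rw [intCount1, h1, Set.ncard_coe_finset]
  have h2 := K.sum_degrees_eq_twice_card_edges
  have h3 : ∀ u, (K.degree u : ℤ) = if u ∈ V1 then ∑ v ∈ V1, adjInd G u v else 0 := by
    intro u
    rw [← SimpleGraph.card_neighborFinset_eq_degree, SimpleGraph.neighborFinset_eq_filter,
      Finset.card_filter]
    push_cast
    split_ifs with hu
    · rw [← Finset.sum_filter_add_sum_filter_not Finset.univ (· ∈ V1)]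
      have : ∑ x with x ∉ V1, (if K.Adj u x then (1 : ℤ) else 0) = 0 := by
        apply Finset.sum_eq_zero
        intro x hx
        simp only [Finset.mem_filter] at hx
        simp [K, hx.2]
      rw [this, add_zero]
      refine Finset.sum_congr (by simp) ?_
      intro x hx
      simp [K, adjInd, hu, hx]
    · simp [K, hu]
  have h4 : ((∑ u, K.degree u : ℕ) : ℤ) = ((2 * K.edgeFinset.card : ℕ) : ℤ) := by rw [h2]
  push_cast at h4
  rw [← h4]
  simp_rw [h3]
  simp [Finset.sum_ite_mem]

lemma sum_deg_eq {n : ℕ} (V1 : Finset (Fin n)) (G : SimpleGraph (Fin n)) :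
    ∑ u ∈ V1, (deg G u : ℤ) = ∑ u ∈ V1, ∑ v ∈ V1, adjInd G u v + cutCount V1 G := by
  rw [cutCount_eq_sum, ← Finset.sum_add_distrib]
  refine Finset.sum_congr rfl fun u _ => ?_
  rw [deg_eq_sum, Finset.sum_add_sum_compl]

/-! ### The effect of a hinge flip -/

/-- `H` arises from `G` by replacing the edge `{i, j}` with the non-edge `{j, k}`. -/
def IsFlip {n : ℕ} (G H : SimpleGraph (Fin n)) (i j k : Fin n) : Prop :=
  G.Adj i j ∧ j ≠ k ∧ ¬ G.Adj j k ∧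
    H = (G.deleteEdges {s(i, j)}) ⊔ fromEdgeSet {s(j, k)}

lemma IsFlip.hingeFlip {n : ℕ} {G H : SimpleGraph (Fin n)} {i j k : Fin n}
    (h : IsFlip G H i j k) : hingeFlip G H := ⟨i, j, k, h⟩

lemma exists_isFlip {n : ℕ} {G : SimpleGraph (Fin n)} {i j k : Fin n} (h1 : G.Adj i j)
    (h2 : j ≠ k) (h3 : ¬ G.Adj j k) : ∃ H, IsFlip G H i j k := ⟨_, h1, h2, h3, rfl⟩

lemma IsFlip.adj_iff {n : ℕ} {G H : SimpleGraph (Fin n)} {i j k : Fin n}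
    (h : IsFlip G H i j k) (u v : Fin n) :
    H.Adj u v ↔ (G.Adj u v ∧ ¬ (u = i ∧ v = j ∨ u = j ∧ v = i)) ∨
      (u = j ∧ v = k ∨ u = k ∧ v = j) := by
  obtain ⟨h1, h2, h3, rfl⟩ := h
  simp only [SimpleGraph.sup_adj, SimpleGraph.deleteEdges_adj, Set.mem_singleton_iff,
    SimpleGraph.fromEdgeSet_adj, Sym2.eq_iff]
  constructor
  · tauto
  · rintro (h | h)
    · exact Or.inl h
    · refine Or.inr ⟨h, ?_⟩
      rintro rfl
      rcases h with ⟨rfl, h⟩ | ⟨h, rfl⟩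
      · exact h2 h
      · exact h2 h

/-- Indicator form of a flip. The four correction terms are products of vertex indicators, which
makes sums over classes of vertices easy to evaluate. -/
lemma IsFlip.adjInd_eq {n : ℕ} {G H : SimpleGraph (Fin n)} {i j k : Fin n}
    (h : IsFlip G H i j k) (u v : Fin n) :
    adjInd H u v = adjInd G u v
      - (if u = i then if v = j then 1 else 0 else 0)
      - (if u = j then if v = i then 1 else 0 else 0)
      + (if u = j then if v = k then 1 else 0 else 0)
      + (if u = k then if v = j then 1 else 0 else 0) := by
  have h1 := h.1
  have h2 := h.2.1
  have h3 := h.2.2.1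
  have h4 := h1.ne
  have h5 : i ≠ k := by rintro rfl; exact h3 h1.symm
  have h6 := h1.symm
  have h7 : ¬ G.Adj k j := fun h => h3 h.symm
  have key := h.adj_iff u v
  clear h
  unfold adjInd
  by_cases hG : G.Adj u v <;> by_cases hH : H.Adj u v <;> grind

lemma IsFlip.deg_eq {n : ℕ} {G H : SimpleGraph (Fin n)} {i j k : Fin n}
    (h : IsFlip G H i j k) (v : Fin n) :
    (deg H v : ℤ) = deg G v - (if v = i then 1 else 0) + (if v = k then 1 else 0) := by
  rw [deg_eq_sum, deg_eq_sum]
  simp_rw [h.adjInd_eq, Finset.sum_add_distrib, Finset.sum_sub_distrib]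
  by_cases a : v = i <;> by_cases b : v = j <;> by_cases c : v = k <;> simp [a, b, c]

lemma sum_pair_indicator {n : ℕ} (V1 : Finset (Fin n)) (a b : Fin n) :
    ∑ u ∈ V1, ∑ v ∈ V1ᶜ, (if u = a then if v = b then (1 : ℤ) else 0 else 0) =
      if a ∈ V1 ∧ b ∉ V1 then 1 else 0 := by
  have h : ∀ u ∈ V1, ∑ v ∈ V1ᶜ, (if u = a then if v = b then (1 : ℤ) else 0 else 0) =
      if u = a then if b ∈ V1 then 0 else 1 else 0 := by
    intro u _
    by_cases hu : u = a <;> simp [hu]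
  rw [Finset.sum_congr rfl h, Finset.sum_ite_eq']
  by_cases ha : a ∈ V1 <;> by_cases hb : b ∈ V1 <;> simp [ha, hb]

lemma IsFlip.cut_eq {n : ℕ} {G H : SimpleGraph (Fin n)} {i j k : Fin n}
    (h : IsFlip G H i j k) (V1 : Finset (Fin n)) :
    (cutCount V1 H : ℤ) = cutCount V1 G - (if (i ∈ V1 ↔ j ∈ V1) then 0 else 1)
      + (if (j ∈ V1 ↔ k ∈ V1) then 0 else 1) := by
  rw [cutCount_eq_sum, cutCount_eq_sum]
  simp_rw [h.adjInd_eq, Finset.sum_add_distrib, Finset.sum_sub_distrib, sum_pair_indicator]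
  by_cases a : i ∈ V1 <;> by_cases b : j ∈ V1 <;> by_cases c : k ∈ V1 <;> simp [a, b, c]


/-! ### Degree deviations -/

/-- The total deviation of the degree sequence of `G` from `d`. -/
noncomputable def dev {n : ℕ} (d : Fin n → ℕ) (G : SimpleGraph (Fin n)) : ℤ :=
  ∑ v, |(d v : ℤ) - (deg G v : ℤ)|

/-- In a family with sum zero, a single term accounts for at most half of the total variation. -/
lemma two_mul_abs_sum_le {n : ℕ} (f : Fin n → ℤ) (hf : ∑ v, f v = 0) (S : Finset (Fin n)) :
    2 * |∑ v ∈ S, f v| ≤ ∑ v, |f v| := by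
  have h1 := Finset.sum_add_sum_compl S f
  have h2 := Finset.sum_add_sum_compl S (fun v => |f v|)
  have h3 := Finset.abs_sum_le_sum_abs f S
  have h4 := Finset.abs_sum_le_sum_abs f Sᶜ
  have h5 : ∑ v ∈ Sᶜ, f v = - ∑ v ∈ S, f v := by linarith
  rw [h5, abs_neg] at h4
  linarith

/-- The effect on the total deviation of moving one unit of degree from `x` to `k`. -/
lemma dev_shift {n : ℕ} {d : Fin n → ℕ} {G H : SimpleGraph (Fin n)} {x k : Fin n}
    (h : ∀ v, (deg H v : ℤ) = deg G v - (if v = x then 1 else 0) + (if v = k then 1 else 0)) :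
    dev d H ≤ dev d G + 2 ∧ (d x < deg G x → dev d H ≤ dev d G) ∧
      (d x < deg G x → deg G k < d k → dev d H ≤ dev d G - 2) := by
  have s1 : ∑ v : Fin n, (if v = x then (1 : ℤ) else 0) = 1 := by simp
  have s2 : ∑ v : Fin n, (if v = k then (1 : ℤ) else 0) = 1 := by simp
  refine ⟨?_, fun hx => ?_, fun hx hk => ?_⟩
  · have : dev d H ≤ ∑ v, (|(d v : ℤ) - (deg G v : ℤ)| + (if v = x then (1 : ℤ) else 0)
        + (if v = k then (1 : ℤ) else 0)) := by
      refine Finset.sum_le_sum fun v _ => ?_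
      rw [h]
      grind
    rw [Finset.sum_add_distrib, Finset.sum_add_distrib, s1, s2] at this
    unfold dev at this ⊢
    linarith
  · have : dev d H ≤ ∑ v, (|(d v : ℤ) - (deg G v : ℤ)| - (if v = x then (1 : ℤ) else 0)
        + (if v = k then (1 : ℤ) else 0)) := by
      refine Finset.sum_le_sum fun v _ => ?_
      rw [h]
      grind
    rw [Finset.sum_add_distrib, Finset.sum_sub_distrib, s1, s2] at this
    unfold dev at this ⊢
    linarith
  · have : dev d H ≤ ∑ v, (|(d v : ℤ) - (deg G v : ℤ)| - (if v = x then (1 : ℤ) else 0)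
        - (if v = k then (1 : ℤ) else 0)) := by
      refine Finset.sum_le_sum fun v _ => ?_
      rw [h]
      grind
    rw [Finset.sum_sub_distrib, Finset.sum_sub_distrib, s1, s2] at this
    unfold dev at this ⊢
    linarith

lemma sum_deg_shift {n : ℕ} {G H : SimpleGraph (Fin n)} {x k : Fin n}
    (h : ∀ v, (deg H v : ℤ) = deg G v - (if v = x then 1 else 0) + (if v = k then 1 else 0))
    (S : Finset (Fin n)) :
    ∑ v ∈ S, (deg H v : ℤ) = ∑ v ∈ S, (deg G v : ℤ) - (if x ∈ S then 1 else 0)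
      + (if k ∈ S then 1 else 0) := by
  simp_rw [h, Finset.sum_add_distrib, Finset.sum_sub_distrib]
  simp

lemma deg_le {n : ℕ} {d : Fin n → ℕ} {G : SimpleGraph (Fin n)} {M : ℕ}
    (hsum : ∑ v, (deg G v : ℤ) = ∑ v, (d v : ℤ)) (hdev : dev d G ≤ 4) (hM : ∀ v, d v ≤ M)
    (v : Fin n) : deg G v ≤ M + 2 := by
  have h := two_mul_abs_sum_le (fun v => (d v : ℤ) - deg G v)
    (by rw [Finset.sum_sub_distrib]; omega) {v}
  rw [Finset.sum_singleton] at h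
  have h2 := neg_abs_le ((d v : ℤ) - deg G v)
  have := hM v
  unfold dev at hdev
  omega

/-! ### Existence of flips -/

/-- Any class has a vertex `k` outside the closed neighbourhood of a given `j`. -/
lemma exists_nonneighbour {n : ℕ} {d : Fin n → ℕ} {G : SimpleGraph (Fin n)} {M : ℕ}
    (hsum : ∑ v, (deg G v : ℤ) = ∑ v, (d v : ℤ)) (hdev : dev d G ≤ 4) (hM : ∀ v, d v ≤ M)
    (hM2 : 2 ≤ M) {S : Finset (Fin n)} (hS : 4 * M ^ 2 ≤ S.card) (j : Fin n) :
    ∃ k ∈ S, j ≠ k ∧ ¬ G.Adj j k := by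
  classical
  by_contra! hcon
  have hsub : S ⊆ insert j (nbr G j) := by
    intro k hk
    rw [Finset.mem_insert, mem_nbr]
    by_cases e : j = k
    · exact Or.inl e.symm
    · exact Or.inr (hcon k hk e)
  have h1 := Finset.card_le_card hsub
  have h2 := Finset.card_insert_le j (nbr G j)
  rw [← deg_eq_card] at h2
  have h3 := deg_le hsum hdev hM j
  nlinarith

/-- Any class has a vertex `k` outside the closed neighbourhood of `j` with a neighbour `j'` outside
the closed neighbourhood of the deficient vertex `y`. The excluded vertices are the at most `M + 3`
in the closed neighbourhood of `j`, the at most two isolated ones (each has deviation at least `2`),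
and the at most `M (M + 2)` having a neighbour in the closed neighbourhood of `y`. -/
lemma exists_relay {n : ℕ} {d : Fin n → ℕ} {G : SimpleGraph (Fin n)} {M : ℕ}
    (hsum : ∑ v, (deg G v : ℤ) = ∑ v, (d v : ℤ)) (hdev : dev d G ≤ 4) (hM : ∀ v, d v ≤ M)
    (hd : ∀ v, 2 ≤ d v) {S : Finset (Fin n)} (hS : 4 * M ^ 2 ≤ S.card) (j y : Fin n)
    (hy : deg G y < d y) :
    ∃ k ∈ S, j ≠ k ∧ ¬ G.Adj j k ∧ ∃ j', G.Adj k j' ∧ j' ≠ y ∧ ¬ G.Adj j' y := by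
  classical
  by_contra! hcon
  have hM2 : 2 ≤ M := (hd y).trans (hM y)
  set I : Finset (Fin n) := Finset.univ.filter (fun v => deg G v = 0) with hI
  have hIc : I.card ≤ 2 := by
    have h1 : ∑ v ∈ I, (2 : ℤ) ≤ ∑ v ∈ I, |(d v : ℤ) - (deg G v : ℤ)| := by
      refine Finset.sum_le_sum fun v hv => ?_
      have h0 : deg G v = 0 := by simpa [hI] using hv
      have := hd v
      rw [h0]
      exact le_trans (by push_cast; omega) (le_abs_self _)
    have h2 : ∑ v ∈ I, |(d v : ℤ) - (deg G v : ℤ)| ≤ dev d G :=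
      Finset.sum_le_sum_of_subset_of_nonneg (Finset.subset_univ I) fun _ _ _ => abs_nonneg _
    rw [Finset.sum_const, nsmul_eq_mul] at h1
    omega
  have hsub : S ⊆ insert j (nbr G j) ∪ I ∪ (insert y (nbr G y)).biUnion (nbr G) := by
    intro k hk
    simp only [Finset.mem_union, Finset.mem_insert, mem_nbr, Finset.mem_biUnion]
    by_cases e : j = k
    · exact Or.inl (Or.inl (Or.inl e.symm))
    by_cases a : G.Adj j k
    · exact Or.inl (Or.inl (Or.inr a))
    by_cases z : deg G k = 0
    · exact Or.inl (Or.inr (by simp [hI, z]))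
    rw [deg_eq_card, Finset.card_eq_zero, ← ne_eq, ← Finset.nonempty_iff_ne_empty] at z
    obtain ⟨j', hj'⟩ := z
    rw [mem_nbr] at hj'
    refine Or.inr ⟨j', ?_, hj'.symm⟩
    by_cases ey : j' = y
    · exact Or.inl ey
    · exact Or.inr (hcon k hk e a j' hj' ey).symm
  have h1 := Finset.card_le_card hsub
  have h2 := Finset.card_union_le (insert j (nbr G j) ∪ I)
    ((insert y (nbr G y)).biUnion (nbr G))
  have h3 := Finset.card_union_le (insert j (nbr G j)) I
  have h4 := Finset.card_insert_le j (nbr G j)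
  have h5 := Finset.card_insert_le y (nbr G y)
  rw [← deg_eq_card] at h4 h5
  have h6 := deg_le hsum hdev hM j
  have h7 : ((insert y (nbr G y)).biUnion (nbr G)).card ≤ (insert y (nbr G y)).card * (M + 2) :=
    Finset.card_biUnion_le_card_mul _ _ _ fun v _ => by
      rw [← deg_eq_card]; exact deg_le hsum hdev hM v
  have h8 : (insert y (nbr G y)).card ≤ M := by have := hM y; omega
  have h9 : (insert y (nbr G y)).card * (M + 2) ≤ M * (M + 2) := Nat.mul_le_mul_right _ h8
  nlinarith

/-- Two flips moving one unit of degree from a surplus vertex `x` to a deficient vertex `y`. The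
second flip stays inside the class of `y`, so the cut count changes only if `x` and `y` lie in
different classes, and then by exactly one. -/
lemma exists_two_flips {n : ℕ} {d : Fin n → ℕ} {G : SimpleGraph (Fin n)} {M : ℕ}
    (V1 : Finset (Fin n))
    (hsum : ∑ v, (deg G v : ℤ) = ∑ v, (d v : ℤ)) (hdev : dev d G ≤ 4) (hM : ∀ v, d v ≤ M)
    (hd : ∀ v, 2 ≤ d v) (hV1 : 4 * M ^ 2 ≤ V1.card) (hV2 : 4 * M ^ 2 ≤ V1ᶜ.card)
    {x y : Fin n} (hx : d x < deg G x) (hy : deg G y < d y) :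
    ∃ H1 H2, hingeFlip G H1 ∧ hingeFlip H1 H2 ∧ dev d H1 ≤ 4 ∧ dev d H2 ≤ 2 ∧
      ∑ v, (deg H1 v : ℤ) = ∑ v, (d v : ℤ) ∧
      (∀ v, (deg H2 v : ℤ) = deg G v - (if v = x then 1 else 0) + (if v = y then 1 else 0)) ∧
      cutCount V1 H2 = cutCount V1 H1 ∧
      ((x ∈ V1 ↔ y ∈ V1) → cutCount V1 H1 = cutCount V1 G) ∧
      (¬ (x ∈ V1 ↔ y ∈ V1) → |(cutCount V1 H1 : ℤ) - cutCount V1 G| = 1) := by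
  obtain ⟨j, hj⟩ : (nbr G x).Nonempty := by
    rw [← Finset.card_pos, ← deg_eq_card]; omega
  rw [mem_nbr] at hj
  obtain ⟨k, hkS, hjk, hnjk, j', hkj', hj'y, hnj'y⟩ : ∃ k, (k ∈ V1 ↔ y ∈ V1) ∧ j ≠ k ∧
      ¬ G.Adj j k ∧ ∃ j', G.Adj k j' ∧ j' ≠ y ∧ ¬ G.Adj j' y := by
    by_cases hyV : y ∈ V1
    · obtain ⟨k, hk, h⟩ := exists_relay hsum hdev hM hd hV1 j y hy
      exact ⟨k, by simp [hk, hyV], h⟩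
    · obtain ⟨k, hk, h⟩ := exists_relay hsum hdev hM hd hV2 j y hy
      rw [Finset.mem_compl] at hk
      exact ⟨k, by simp [hk, hyV], h⟩
  obtain ⟨H1, hH1⟩ := exists_isFlip hj hjk hnjk
  have hj'j : j' ≠ j := by rintro rfl; exact hnjk hkj'.symm
  have hj'k : j' ≠ k := hkj'.ne'
  have hxk : k ≠ x := by rintro rfl; exact hnjk hj.symm
  obtain ⟨H2, hH2⟩ : ∃ H2, IsFlip H1 H2 k j' y := by
    refine exists_isFlip ?_ hj'y ?_
    · rw [hH1.adj_iff]; tauto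
    · rw [hH1.adj_iff]; tauto
  have d1 := hH1.deg_eq
  have d2 : ∀ v, (deg H2 v : ℤ) =
      deg G v - (if v = x then 1 else 0) + (if v = y then 1 else 0) := by
    intro v
    rw [hH2.deg_eq, d1]
    ring
  have c1 := hH1.cut_eq V1
  have c2 := hH2.cut_eq V1
  refine ⟨H1, H2, hH1.hingeFlip, hH2.hingeFlip, ((dev_shift d1).2.1 hx).trans hdev, ?_, ?_, d2,
    ?_, ?_, ?_⟩
  · have := (dev_shift d2).2.2 hx hy
    omega
  · rw [sum_deg_shift d1]; simpa using hsum
  · by_cases a : j' ∈ V1 <;> by_cases b : y ∈ V1 <;> simp [a, b, hkS] at c2 <;> omega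
  · intro hxy
    by_cases a : j ∈ V1 <;> by_cases b : y ∈ V1 <;> simp [a, b, hkS, hxy] at c1 <;> omega
  · intro hxy
    by_cases a : j ∈ V1 <;> by_cases b : y ∈ V1 <;> by_cases c : x ∈ V1 <;>
      simp [b, c] at hxy <;> simp [a, b, c, hkS] at c1 <;> simp [c1]

/-- One flip balancing a graph whose cut count is off by one and whose class `V₁` has degree sum
one too large. The flip `ij → jk` takes `i ∈ V₁` and `k ∈ V₂`, with `j` on whichever side corrects
the cut count. -/
lemma exists_balancing_flip {n : ℕ} {d : Fin n → ℕ} {G : SimpleGraph (Fin n)} {M γ c11 : ℕ}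
    (V1 : Finset (Fin n))
    (hsum : ∑ v, (deg G v : ℤ) = ∑ v, (d v : ℤ)) (hdev : dev d G ≤ 2) (hM : ∀ v, d v ≤ M)
    (hM2 : 2 ≤ M) (hV2 : 4 * M ^ 2 ≤ V1ᶜ.card)
    (hc : 2 * (c11 : ℤ) + γ = ∑ v ∈ V1, (d v : ℤ))
    (hD : ∑ v ∈ V1, (deg G v : ℤ) = ∑ v ∈ V1, (d v : ℤ) + 1)
    (hcut : |(cutCount V1 G : ℤ) - γ| = 1) :
    ∃ H, hingeFlip G H ∧ dev d H ≤ 4 ∧ ∑ v, (deg H v : ℤ) = ∑ v, (d v : ℤ) ∧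
      cutCount V1 H = γ ∧ ∑ v ∈ V1, (deg H v : ℤ) = ∑ v ∈ V1, (d v : ℤ) := by
  obtain ⟨i, j, hi, hij, hj⟩ : ∃ i j, i ∈ V1 ∧ G.Adj i j ∧
      (j ∈ V1 ↔ (cutCount V1 G : ℤ) = γ - 1) := by
    by_contra! hcon
    rcases (abs_eq (by norm_num : (0 : ℤ) ≤ 1)).1 hcut with h | h
    · have h0 : (cutCount V1 G : ℤ) = 0 := by
        rw [cutCount_eq_sum]
        refine Finset.sum_eq_zero fun u hu => Finset.sum_eq_zero fun v hv => ?_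
        rw [adjInd, if_neg]
        intro ha
        rw [Finset.mem_compl] at hv
        rcases hcon u v hu ha with h' | h'
        · exact hv h'.1
        · omega
      omega
    · have h0 : ∑ u ∈ V1, ∑ v ∈ V1, adjInd G u v = 0 := by
        refine Finset.sum_eq_zero fun u hu => Finset.sum_eq_zero fun v hv => ?_
        rw [adjInd, if_neg]
        intro ha
        rcases hcon u v hu ha with h' | h'
        · omega
        · exact h'.1 hv
      have := sum_deg_eq V1 G
      omega
  obtain ⟨k, hk, hjk, hnjk⟩ :=
    exists_nonneighbour hsum (hdev.trans (by norm_num)) hM hM2 hV2 j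
  rw [Finset.mem_compl] at hk
  obtain ⟨H, hH⟩ := exists_isFlip hij hjk hnjk
  have d1 := hH.deg_eq
  have c1 := hH.cut_eq V1
  refine ⟨H, hH.hingeFlip, ?_, ?_, ?_, ?_⟩
  · have := (dev_shift (d := d) d1).1
    omega
  · rw [sum_deg_shift d1]; simpa using hsum
  · rcases (abs_eq (by norm_num : (0 : ℤ) ≤ 1)).1 hcut with h | h
    · have : j ∉ V1 := by rw [hj]; omega
      simp [hi, hk, this] at c1
      omega
    · have : j ∈ V1 := by rw [hj]; omega
      simp [hi, hk, this] at c1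
      omega
  · rw [sum_deg_shift d1]
    simp [hi, hk, hD]

/-! ### Balancing -/

lemma memPAM'_iff {n : ℕ} {V1 : Finset (Fin n)} {γ : ℕ} {d : Fin n → ℕ}
    {G : SimpleGraph (Fin n)} : memPAM' V1 γ d G ↔
      (∑ v, (deg G v : ℤ) = ∑ v, (d v : ℤ)) ∧ dev d G ≤ 4 ∧
        |(cutCount V1 G : ℤ) - (γ : ℤ)| ≤ 1 := by
  unfold memPAM' dev
  norm_cast

/-- If the degree sum over `V₁` is too large and the total deviation exceeds `2`, there are a
surplus vertex `x` and a deficient vertex `y`, in the same class if the degree sum over `V₁`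
exceeds its target by one, and in different classes if it exceeds it by two. -/
lemma exists_surplus_deficient {n : ℕ} {d : Fin n → ℕ} {G : SimpleGraph (Fin n)}
    (V1 : Finset (Fin n))
    (hsum : ∑ v, (deg G v : ℤ) = ∑ v, (d v : ℤ)) (hdev : ¬ dev d G ≤ 2)
    (hD : ∑ v ∈ V1, (deg G v : ℤ) = ∑ v ∈ V1, (d v : ℤ) + 1 ∨
      ∑ v ∈ V1, (deg G v : ℤ) = ∑ v ∈ V1, (d v : ℤ) + 2) :
    ∃ x y, d x < deg G x ∧ deg G y < d y ∧
      ((x ∈ V1 ↔ y ∈ V1) ↔ ∑ v ∈ V1, (deg G v : ℤ) = ∑ v ∈ V1, (d v : ℤ) + 1) ∧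
      (¬ (x ∈ V1 ↔ y ∈ V1) → x ∈ V1 ∧ y ∉ V1) := by
  have e1 := Finset.sum_add_sum_compl V1 (fun v => (deg G v : ℤ))
  have e2 := Finset.sum_add_sum_compl V1 (fun v => (d v : ℤ))
  obtain ⟨x, hx, hxd⟩ : ∃ x ∈ V1, (d x : ℤ) < deg G x :=
    Finset.exists_lt_of_sum_lt (by omega)
  obtain ⟨y, hy, hyd⟩ : ∃ y ∈ V1ᶜ, (deg G y : ℤ) < d y :=
    Finset.exists_lt_of_sum_lt (by omega)
  have hyc := Finset.mem_compl.1 hy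
  rcases hD with hD | hD
  · by_contra! hcon
    have k1 : ∀ v ∈ V1, |(d v : ℤ) - deg G v| = deg G v - d v := by
      intro v hv
      rw [abs_of_nonpos]
      · ring
      · by_contra hlt
        have := hcon x v (by omega) (by omega) (by simp [hx, hv, hD])
        tauto
    have k2 : ∀ v ∈ V1ᶜ, |(d v : ℤ) - deg G v| = d v - deg G v := by
      intro v hv
      have hv' := Finset.mem_compl.1 hv
      rw [abs_of_nonneg]
      by_contra hlt
      have := hcon v y (by omega) (by omega) (by simp [hv', hyc, hD])
      tauto
    apply hdev
    rw [dev, ← Finset.sum_add_sum_compl V1, Finset.sum_congr rfl k1, Finset.sum_congr rfl k2,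
      Finset.sum_sub_distrib, Finset.sum_sub_distrib]
    omega
  · exact ⟨x, y, by omega, by omega, by simp [hx, hyc, hD], fun _ => ⟨hx, hyc⟩⟩

/-- The case in which `V₁` has too large a degree sum. -/
lemma exists_path_of_lt {n : ℕ} {d : Fin n → ℕ} {G : SimpleGraph (Fin n)} {M γ c11 : ℕ}
    (V1 : Finset (Fin n)) (hM : ∀ v, d v ≤ M) (hM2 : 2 ≤ M)
    (hd : ∀ v, 2 ≤ d v) (hV1 : 4 * M ^ 2 ≤ V1.card) (hV2 : 4 * M ^ 2 ≤ V1ᶜ.card)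
    (hc : 2 * (c11 : ℤ) + γ = ∑ v ∈ V1, (d v : ℤ)) (hG : memPAM' V1 γ d G)
    (hlt : ∑ v ∈ V1, (d v : ℤ) < ∑ v ∈ V1, (deg G v : ℤ)) :
    ∃ t ≤ 3, ∃ f : ℕ → SimpleGraph (Fin n), f 0 = G ∧
      (∀ i ≤ t, memPAM' V1 γ d (f i)) ∧ (∀ i < t, hingeFlip (f i) (f (i+1))) ∧
      cutCount V1 (f t) = γ ∧ ∑ v ∈ V1, (deg (f t) v : ℤ) = ∑ v ∈ V1, (d v : ℤ) := by
  have hG' := hG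
  rw [memPAM'_iff] at hG
  obtain ⟨hsum, hdev, hcut⟩ := hG
  have hpar := sum_deg_eq V1 G
  rw [← two_mul_intCount1] at hpar
  have habs := two_mul_abs_sum_le (fun v => (deg G v : ℤ) - d v)
    (by rw [Finset.sum_sub_distrib]; omega) V1
  have hdev' : ∑ v, |(deg G v : ℤ) - d v| = dev d G :=
    Finset.sum_congr rfl fun v _ => abs_sub_comm _ _
  rw [hdev', Finset.sum_sub_distrib] at habs
  have habs' := le_abs_self (∑ v ∈ V1, (deg G v : ℤ) - ∑ v ∈ V1, (d v : ℤ))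
  have hcut' := abs_le.1 hcut
  by_cases hdev2 : dev d G ≤ 2
  · have hD : ∑ v ∈ V1, (deg G v : ℤ) = ∑ v ∈ V1, (d v : ℤ) + 1 := by omega
    obtain ⟨H, hf, h1, h2, h3, h4⟩ := exists_balancing_flip V1 hsum hdev2 hM hM2 hV2 hc hD
      (by rw [abs_eq (by norm_num)]; omega)
    refine ⟨1, by norm_num, fun | 0 => G | _ => H, rfl, ?_, ?_, h3, h4⟩
    · intro i hi
      have hH : memPAM' V1 γ d H := memPAM'_iff.2 ⟨h2, h1, by simp [h3]⟩
      interval_cases i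
      · exact hG'
      · exact hH
    · intro i hi
      interval_cases i
      exact hf
  · have hD : ∑ v ∈ V1, (deg G v : ℤ) = ∑ v ∈ V1, (d v : ℤ) + 1 ∨
        ∑ v ∈ V1, (deg G v : ℤ) = ∑ v ∈ V1, (d v : ℤ) + 2 := by omega
    obtain ⟨x, y, hx, hy, hxy, hxy'⟩ := exists_surplus_deficient V1 hsum hdev2 hD
    obtain ⟨H1, H2, f1, f2, v1, v2, s1, dg, c2, c1, c1'⟩ :=
      exists_two_flips V1 hsum hdev hM hd hV1 hV2 hx hy
    have s2 : ∑ v, (deg H2 v : ℤ) = ∑ v, (d v : ℤ) := by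
      rw [sum_deg_shift dg]; simpa using hsum
    have hcut2 : |(cutCount V1 H1 : ℤ) - γ| = 1 := by
      by_cases a : x ∈ V1 ↔ y ∈ V1
      · have := hxy.1 a
        rw [c1 a, abs_eq (by norm_num)]
        omega
      · -- parity: the degree sum is off by two, so the cut count of `G` is exactly `γ`
        have h2 : (cutCount V1 G : ℤ) = γ := by
          have : ¬ _ := fun h => a (hxy.2 h)
          omega
        rw [← h2]
        exact c1' a
    have hD2 : ∑ v ∈ V1, (deg H2 v : ℤ) = ∑ v ∈ V1, (d v : ℤ) + 1 := by
      rw [sum_deg_shift dg]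
      by_cases a : x ∈ V1 ↔ y ∈ V1
      · have := hxy.1 a
        simp [a, this]
      · obtain ⟨b1, b2⟩ := hxy' a
        have : ¬ _ := fun h => a (hxy.2 h)
        simp only [b1, b2, if_true, if_false]
        omega
    obtain ⟨H, hf, h1, h2, h3, h4⟩ := exists_balancing_flip V1 s2 v2 hM hM2 hV2 hc hD2
      (by rw [c2]; exact hcut2)
    refine ⟨3, le_rfl, fun | 0 => G | 1 => H1 | 2 => H2 | _ => H, rfl, ?_, ?_, h3, h4⟩
    · intro i hi
      have m1 : memPAM' V1 γ d H1 := memPAM'_iff.2 ⟨s1, v1, hcut2.le⟩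
      have m2 : memPAM' V1 γ d H2 :=
        memPAM'_iff.2 ⟨s2, v2.trans (by norm_num), by rw [c2]; exact hcut2.le⟩
      have m3 : memPAM' V1 γ d H := memPAM'_iff.2 ⟨h2, h1, by simp [h3]⟩
      interval_cases i
      · exact hG'
      · exact m1
      · exact m2
      · exact m3
    · intro i hi
      interval_cases i
      · exact f1
      · exact f2
      · exact hf


/-- Fix `0 < α < 1/2`. For any graphical two-class PAM
instance with `|V₁|, |V₂| ≥ αn`, `2 ≤ dᵢ ≤ √(αn/4)` for all `i`, and
`1 ≤ γ ≤ αn/2`, every `G ∈ 𝒢'(γ,d)` can be transformed by at most `3` hinge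
flips, within `𝒢'(γ,d)`, into an edge-balanced graph: one with exactly `γ` cut
edges, `c₁₁` internal edges in `V₁` and `c₂₂` internal edges in `V₂`. -/
theorem stmt16 {n : ℕ} (α : ℝ) (hα0 : 0 < α) (hα1 : α < 1 / 2)
    (V1 : Finset (Fin n)) (γ : ℕ) (d : Fin n → ℕ) (c11 c22 : ℕ)
    (hV1ne : V1.Nonempty) (hV2ne : V1ᶜ.Nonempty)
    (hV1 : α * n ≤ (V1.card : ℝ)) (hV2 : α * n ≤ ((V1ᶜ : Finset (Fin n)).card : ℝ))
    (hdlo : ∀ i, 2 ≤ d i) (hdhi : ∀ i, ((d i : ℝ)) ^ 2 ≤ α * n / 4)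
    (hγlo : 1 ≤ γ) (hγhi : (γ : ℝ) ≤ α * n / 2)
    (hgraphical : ∃ H : SimpleGraph (Fin n), memPAM V1 γ d H)
    (hc11 : 2 * c11 + γ = ∑ j ∈ V1, d j)
    (hc22 : 2 * c22 + γ = ∑ j ∈ V1ᶜ, d j) :
    ∀ G : SimpleGraph (Fin n), memPAM' V1 γ d G →
      ∃ t ≤ 3, ∃ f : ℕ → SimpleGraph (Fin n), f 0 = G ∧
        (∀ i ≤ t, memPAM' V1 γ d (f i)) ∧
        (∀ i < t, hingeFlip (f i) (f (i+1))) ∧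
        cutCount V1 (f t) = γ ∧ intCount1 V1 (f t) = c11 ∧ intCount2 V1 (f t) = c22 := by
  intro G hG
  obtain ⟨v0, _⟩ := hV1ne
  have : Nonempty (Fin n) := ⟨v0⟩
  obtain ⟨m, hm⟩ := Finite.exists_max d
  have hM2 := hdlo m
  have hS : ∀ S : Finset (Fin n), α * n ≤ (S.card : ℝ) → 4 * d m ^ 2 ≤ S.card := by
    intro S h
    have h' := hdhi m
    have : ((4 * d m ^ 2 : ℕ) : ℝ) ≤ (S.card : ℝ) := by push_cast; linarith
    exact_mod_cast this
  have hb1 := hS _ hV1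
  have hb2 := hS _ hV2
  have e1 : 2 * (c11 : ℤ) + γ = ∑ v ∈ V1, (d v : ℤ) := by exact_mod_cast hc11
  have e2 : 2 * (c22 : ℤ) + γ = ∑ v ∈ V1ᶜ, (d v : ℤ) := by exact_mod_cast hc22
  have hd12 := Finset.sum_add_sum_compl V1 (fun v => (d v : ℤ))
  -- the cut count and the degree sum over `V₁` determine both internal edge counts
  have hfin : ∀ H : SimpleGraph (Fin n), memPAM' V1 γ d H →
      ∑ v ∈ V1, (deg H v : ℤ) = ∑ v ∈ V1, (d v : ℤ) →
      cutCount V1 H = γ ∧ intCount1 V1 H = c11 ∧ intCount2 V1 H = c22 := by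
    intro H hH hD
    rw [memPAM'_iff] at hH
    have hcut := abs_le.1 hH.2.2
    have hs := hH.1
    have p1 := sum_deg_eq V1 H
    have p2 := sum_deg_eq V1ᶜ H
    rw [← two_mul_intCount1] at p1 p2
    rw [cutCount_compl, ← intCount2_eq] at p2
    have p3 := Finset.sum_add_sum_compl V1 (fun v => (deg H v : ℤ))
    omega
  have hsymm : ∀ H : SimpleGraph (Fin n), memPAM' V1ᶜ γ d H ↔ memPAM' V1 γ d H := by
    intro H
    rw [memPAM'_iff, memPAM'_iff, cutCount_compl]
  rcases lt_trichotomy (∑ v ∈ V1, (d v : ℤ)) (∑ v ∈ V1, (deg G v : ℤ)) with h | h | h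
  · obtain ⟨t, ht, f, f0, fm, ff, -, fD⟩ :=
      exists_path_of_lt V1 hm hM2 hdlo hb1 hb2 e1 hG h
    exact ⟨t, ht, f, f0, fm, ff, hfin _ (fm t le_rfl) fD⟩
  · exact ⟨0, by norm_num, fun _ => G, rfl, fun _ _ => hG, fun i hi => absurd hi (by omega),
      hfin G hG h.symm⟩
  · have hg := Finset.sum_add_sum_compl V1 (fun v => (deg G v : ℤ))
    have hs := (memPAM'_iff.1 hG).1
    obtain ⟨t, ht, f, f0, fm, ff, -, fD⟩ :=
      exists_path_of_lt V1ᶜ hm hM2 hdlo hb2 (by rwa [compl_compl]) e2 ((hsymm G).2 hG)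
        (by omega)
    have fm' : ∀ i ≤ t, memPAM' V1 γ d (f i) := fun i hi => (hsymm _).1 (fm i hi)
    have hg' := Finset.sum_add_sum_compl V1 (fun v => (deg (f t) v : ℤ))
    have hs' := (memPAM'_iff.1 (fm' t le_rfl)).1
    exact ⟨t, ht, f, f0, fm', ff, hfin _ (fm' t le_rfl) (by omega)⟩
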